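/- arXiv:1812.00112 — 2 statements merged into one kernel-verified Lean document; each statement's English description precedes it below -/
import Mathlib

section
/- For every ε > 0, there exists a normalizing function χ : ℝ → [−1, 1] (smooth, odd, positive on (0,∞), with limits ±1 at ±∞) whose distributional Fourier transform is supported in the interval (−ε, ε). -/
open MeasureTheory
open scoped FourierTransform

/-!
Choose an even bump function `g` supported in the ball of radius `ε / 2` and put `G = g ⋆ g`.
Then `h = 𝓕⁻ G = (𝓕⁻ g) ^ 2` is nonnegative, even and integrable, so its primitive, divided by
`∫ s in Set.Ioi 0, h s`, is a normalizing function `χ`. Since `h` is even, `χ` is a multiple of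
`sign ⋆ h`, so its Fourier transform is a multiple of `𝓕 sign * G`, which lives where `G` does.
In terms of a test function `φ`, Fubini turns the pairing of `u ⋆ 𝓕⁻ G` with `𝓕 φ` into that of `u`
with `𝓕 G ⋆ 𝓕 φ = 𝓕 (G * φ) = 0`.
-/

open Function Set Filter Topology ContinuousLinearMap
open scoped Pointwise Convolution SchwartzMap ContDiff ComplexOrder ComplexConjugate

section ConvolutionDuality

variable {𝕜 X E F E' : Type*} [RCLike 𝕜] [AddCommGroup X] [MeasurableSpace X] [MeasurableAdd₂ X]
  [MeasurableNeg X] {μ : Measure X} [SFinite μ] [μ.IsAddLeftInvariant] [μ.IsNegInvariant]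
  [NormedAddCommGroup E] [NormedSpace ℝ E] [NormedSpace 𝕜 E] [CompleteSpace E]
  [NormedAddCommGroup F] [NormedSpace 𝕜 F]
  [NormedAddCommGroup E'] [NormedSpace ℝ E'] [NormedSpace 𝕜 E'] [CompleteSpace E']

theorem integral_bilin_smul_convolution_eq (L : E →L[𝕜] F →L[𝕜] E') {u : X → 𝕜} {C : ℝ}
    (hu : AEStronglyMeasurable u μ) (huC : ∀ t, ‖u t‖ ≤ C) {h : X → E} (hh : Integrable h μ)
    {f : X → F} (hf : Integrable f μ) :
    ∫ x, L ((u ⋆[lsmul 𝕜 𝕜, μ] h) x) (f x) ∂μ =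
      ∫ t, u t • ((fun x ↦ h (-x)) ⋆[L, μ] f) t ∂μ := by
  have integrable_slice (x : X) : Integrable (fun t ↦ u t • h (x - t)) μ :=
    (hh.comp_sub_left x).bdd_smul C hu (.of_forall huC)
  have integrable_prod :
      Integrable (fun p : X × X ↦ u p.2 • L (h (p.1 - p.2)) (f p.1)) (μ.prod μ) := by
    have swapped := (hf.convolution_integrand L.flip hh.comp_neg).swap
    have unweighted : Integrable (fun p : X × X ↦ L (h (p.1 - p.2)) (f p.1)) (μ.prod μ) := by
      simpa [comp_def] using swapped
    exact unweighted.bdd_smul C hu.comp_snd (.of_forall fun p ↦ huC p.2)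
  calc ∫ x, L ((u ⋆[lsmul 𝕜 𝕜, μ] h) x) (f x) ∂μ
      = ∫ x, ∫ t, u t • L (h (x - t)) (f x) ∂μ ∂μ := by
        refine integral_congr_ae (.of_forall fun x ↦ ?_)
        simpa [convolution_def] using ((L.flip (f x)).integral_comp_comm (integrable_slice x)).symm
    _ = ∫ t, ∫ x, u t • L (h (x - t)) (f x) ∂μ ∂μ := integral_integral_swap integrable_prod
    _ = ∫ t, u t • ((fun x ↦ h (-x)) ⋆[L, μ] f) t ∂μ := by
        simp [integral_smul, convolution_eq_swap]

end ConvolutionDuality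

section Fourier

variable {V E : Type*} [NormedAddCommGroup V] [InnerProductSpace ℝ V] [FiniteDimensional ℝ V]
  [MeasurableSpace V] [BorelSpace V] [NormedAddCommGroup E] [NormedSpace ℂ E]
  {E₁ E₂ E₃ : Type*} [NormedAddCommGroup E₁] [NormedSpace ℂ E₁] [CompleteSpace E₁]
  [NormedAddCommGroup E₂] [NormedSpace ℂ E₂] [CompleteSpace E₂]
  [NormedAddCommGroup E₃] [NormedSpace ℂ E₃] [CompleteSpace E₃]

theorem even_fourier {f : V → E} (hf : f.Even) : (𝓕 f).Even := fun w ↦ by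
  rw [← Real.fourierInv_eq_fourier_neg, Real.fourierInv_eq_fourier_comp_neg, funext hf]

theorem conj_fourier (f : V → ℂ) (w : V) : conj (𝓕 f w) = 𝓕 (fun v ↦ conj (f (-v))) w := by
  rw [Real.fourier_eq, Real.fourier_eq, ← integral_conj, ← integral_neg_eq_self]
  simp [Circle.smul_def, ← Circle.coe_inv_eq_conj, ← AddChar.map_neg_eq_inv]

theorem schwartzMap_fourierInv_apply (f : 𝓢(V, E)) (w : V) : 𝓕⁻ f w = 𝓕 f (-w) := by
  rw [SchwartzMap.fourierInv_coe, Real.fourierInv_eq_fourier_neg, SchwartzMap.fourier_coe]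

theorem schwartzMap_fourier_fourier_apply [CompleteSpace E] (f : 𝓢(V, E)) (v : V) :
    𝓕 (𝓕 f) v = f (-v) := by
  rw [← neg_neg v, ← schwartzMap_fourierInv_apply, FourierTransform.fourierInv_fourier_eq, neg_neg]

theorem schwartzMap_fourier_mul_convolution_apply (f g : 𝓢(V, ℂ)) (w : V) :
    𝓕 (SchwartzMap.convolution (.mul ℂ ℂ) f g) w = 𝓕 f w * 𝓕 g w := by
  rw [SchwartzMap.fourier_convolution, SchwartzMap.pairing_apply_apply, mul_apply']

theorem fourier_convolution_self_nonneg {g : 𝓢(V, ℂ)} (hg : ∀ v, conj (g (-v)) = g v) (w : V) :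
    0 ≤ 𝓕 (SchwartzMap.convolution (.mul ℂ ℂ) g g) w := by
  have fourier_real : conj (𝓕 g w) = 𝓕 g w := by
    rw [SchwartzMap.fourier_coe, conj_fourier, funext hg]
  rw [schwartzMap_fourier_mul_convolution_apply]
  nth_rw 1 [← fourier_real]
  exact star_mul_self_nonneg _

theorem support_schwartzMap_convolution_subset (B : E₁ →L[ℂ] E₂ →L[ℂ] E₃) (f : 𝓢(V, E₁))
    (g : 𝓢(V, E₂)) : support (SchwartzMap.convolution B f g) ⊆ support f + support g := by
  rw [funext (SchwartzMap.convolution_apply B f g)]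
  exact support_convolution_subset B

theorem schwartzMap_convolution_fourier_fourier (B : E₁ →L[ℂ] E₂ →L[ℂ] E₃) (f : 𝓢(V, E₁))
    (g : 𝓢(V, E₂)) :
    SchwartzMap.convolution B (𝓕 f) (𝓕 g) = 𝓕 (SchwartzMap.pairing B f g) := by
  apply (FourierTransform.fourierEquiv ℂ 𝓢(V, E₃)).injective
  ext v
  simp [SchwartzMap.fourier_convolution, SchwartzMap.pairing_apply_apply,
    schwartzMap_fourier_fourier_apply]

theorem integral_convolution_fourierInv_mul_fourier_eq_zero {u : V → ℝ} {C : ℝ}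
    (hu : AEStronglyMeasurable u) (huC : ∀ t, ‖u t‖ ≤ C) {G φ : 𝓢(V, ℂ)}
    (hGφ : ∀ v, G v * φ v = 0) :
    ∫ x, (u ⋆[lsmul ℝ ℝ] ⇑(𝓕⁻ G : 𝓢(V, ℂ))) x * 𝓕 φ x = 0 := by
  have reflection : (fun x ↦ 𝓕⁻ G (-x)) = 𝓕 G := by
    ext x
    rw [schwartzMap_fourierInv_apply, neg_neg]
  have pairing_eq_zero : SchwartzMap.pairing (.mul ℂ ℂ) G φ = 0 := by
    ext v
    simpa using hGφ v
  have convolution_eq_zero (t : V) : (⇑(𝓕 G : 𝓢(V, ℂ)) ⋆[.mul ℂ ℂ] ⇑(𝓕 φ : 𝓢(V, ℂ))) t = 0 := by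
    rw [← SchwartzMap.convolution_apply, schwartzMap_convolution_fourier_fourier, pairing_eq_zero,
      FourierTransform.fourier_zero, zero_apply]
  have duality := integral_bilin_smul_convolution_eq (ContinuousLinearMap.mul ℝ ℂ) hu huC
    (𝓕⁻ G).integrable (𝓕 φ).integrable
  rw [reflection] at duality
  refine duality.trans (integral_eq_zero_of_ae (.of_forall fun t ↦ ?_))
  exact smul_eq_zero_of_right _ (convolution_eq_zero t)

theorem exists_schwartzMap_support_subset_ball_fourierInv_nonneg {r : ℝ} (hr : 0 < r) :
    ∃ G : 𝓢(V, ℂ), support G ⊆ Metric.ball 0 r ∧ (⇑(𝓕⁻ G : 𝓢(V, ℂ))).Even ∧ (∀ w, 0 ≤ 𝓕⁻ G w) ∧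
      0 < 𝓕⁻ G 0 := by
  let b : ContDiffBump (0 : V) := ⟨r / 4, r / 2, by positivity, by linarith⟩
  let g : 𝓢(V, ℂ) := (b.hasCompactSupport.comp_left Complex.ofReal_zero).toSchwartzMap
    (Complex.ofRealCLM.contDiff.comp b.contDiff)
  have g_apply (v : V) : g v = b v := rfl
  have support_g : support g = Metric.ball 0 (r / 2) := by
    rw [← b.support_eq]
    ext v
    simp [g_apply]
  have g_even : (⇑g).Even := fun v ↦ by rw [g_apply, g_apply, b.neg]
  have fourier_g_zero : 𝓕 g 0 = (∫ v, b v : ℝ) := by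
    rw [SchwartzMap.fourier_coe, Real.fourier_eq, ← integral_complex_ofReal]
    simp [g_apply]
  let G := SchwartzMap.convolution (.mul ℂ ℂ) g g
  refine ⟨G, ?_, fun w ↦ ?_, fun w ↦ ?_, ?_⟩
  · calc support G ⊆ support g + support g := support_schwartzMap_convolution_subset _ g g
      _ = Metric.ball 0 r := by
        rw [support_g, ball_add_ball (half_pos hr) (half_pos hr), add_halves, add_zero]
  · simp only [schwartzMap_fourierInv_apply, G, schwartzMap_fourier_mul_convolution_apply,
      SchwartzMap.fourier_coe, even_fourier g_even _]
  · rw [schwartzMap_fourierInv_apply]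
    exact fourier_convolution_self_nonneg (fun v ↦ by rw [g_even, g_apply, Complex.conj_ofReal]) _
  · rw [schwartzMap_fourierInv_apply, neg_zero, schwartzMap_fourier_mul_convolution_apply,
      fourier_g_zero]
    have := b.integral_pos (μ := volume)
    exact_mod_cast mul_pos this this

end Fourier

section Primitive

variable {E : Type*} [NormedAddCommGroup E] [NormedSpace ℝ E]

theorem contDiff_infty_primitive [CompleteSpace E] {f : ℝ → E} (hf : ContDiff ℝ ∞ f) (a : ℝ) :
    ContDiff ℝ ∞ (fun x ↦ ∫ s in a..x, f s) := by
  have hderiv := hf.continuous.deriv_integral f a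
  refine contDiff_infty_iff_deriv.2
    ⟨fun x ↦ (hf.continuous.integral_hasStrictDerivAt a x).hasDerivAt.differentiableAt, ?_⟩
  rwa [funext hderiv]

theorem odd_primitive {f : ℝ → E} (hf : f.Even) : (fun x ↦ ∫ s in (0 : ℝ)..x, f s).Odd := fun x ↦ by
  have reflection := intervalIntegral.integral_comp_neg (a := 0) (b := x) f
  rw [funext hf, neg_zero] at reflection
  simp only [reflection]
  exact intervalIntegral.integral_symm _ _

theorem monotone_primitive {f : ℝ → ℝ} (hf : Integrable f) (hf0 : 0 ≤ f) (a : ℝ) :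
    Monotone fun x ↦ ∫ s in a..x, f s := fun x y hxy ↦ by
  rw [← sub_nonneg, intervalIntegral.integral_interval_sub_left hf.intervalIntegrable
    hf.intervalIntegrable]
  exact intervalIntegral.integral_nonneg_of_forall hxy hf0

theorem measurable_real_sign : Measurable Real.sign :=
  Measurable.ite measurableSet_Iio measurable_const
    (Measurable.ite measurableSet_Ioi measurable_const measurable_const)

theorem norm_real_sign_le_one (x : ℝ) : ‖Real.sign x‖ ≤ 1 := by
  rcases Real.sign_apply_eq x with h | h | h <;> simp [h]

theorem sign_convolution {f : ℝ → E} (hf : Integrable f) (x : ℝ) :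
    (Real.sign ⋆[lsmul ℝ ℝ] f) x = (∫ s in Iic x, f s) - ∫ s in Ioi x, f s := by
  rw [convolution_eq_swap, ← integral_indicator measurableSet_Iic,
    ← integral_indicator measurableSet_Ioi,
    ← integral_sub (hf.indicator measurableSet_Iic) (hf.indicator measurableSet_Ioi)]
  refine integral_congr_ae ?_
  filter_upwards [Measure.ae_ne volume x] with t ht
  rcases ht.lt_or_gt with htx | hxt
  · simp [Real.sign_of_pos (sub_pos.2 htx), htx.le]
  · simp [Real.sign_of_neg (sub_neg.2 hxt), hxt]

theorem sign_convolution_of_even {f : ℝ → E} (hf : Integrable f) (hf_even : f.Even) (x : ℝ) :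
    (Real.sign ⋆[lsmul ℝ ℝ] f) x = (2 : ℝ) • ∫ s in (0 : ℝ)..x, f s := by
  have halves_eq : ∫ s in Iic 0, f s = ∫ s in Ioi 0, f s := by
    simpa [hf_even _] using integral_comp_neg_Iic 0 f
  have total (b : ℝ) : (∫ s in Iic b, f s) + ∫ s in Ioi b, f s = ∫ s, f s :=
    intervalIntegral.integral_Iic_add_Ioi hf.integrableOn hf.integrableOn
  rw [sign_convolution hf, ← intervalIntegral.integral_Iic_sub_Iic hf.integrableOn hf.integrableOn,
    eq_sub_of_add_eq' (total x), ← total 0, ← halves_eq, two_smul]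
  abel

end Primitive

/-- A normalizing function: a smooth odd function `ℝ → [-1, 1]` which is positive on `(0, ∞)` and
tends to `±1` at `±∞`. The codomain `[-1, 1]` is encoded as the field `mem_Icc`. -/
structure IsNormalizing (χ : ℝ → ℝ) : Prop where
  contDiff : ContDiff ℝ ∞ χ
  mem_Icc : ∀ x, χ x ∈ Icc (-1) 1
  odd : χ.Odd
  pos : ∀ x > 0, 0 < χ x
  tendsto_atTop : Tendsto χ atTop (𝓝 1)
  tendsto_atBot : Tendsto χ atBot (𝓝 (-1))

theorem IsNormalizing.of_monotone {χ : ℝ → ℝ} (contDiff : ContDiff ℝ ∞ χ) (monotone : Monotone χ)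
    (odd : χ.Odd) (pos : ∀ x > 0, 0 < χ x) (tendsto_atTop : Tendsto χ atTop (𝓝 1)) :
    IsNormalizing χ := by
  have tendsto_atBot : Tendsto χ atBot (𝓝 (-1)) := by
    simpa [comp_def, odd _] using (tendsto_atTop.comp tendsto_neg_atBot_atTop).neg
  exact ⟨contDiff, fun x ↦ ⟨monotone.le_of_tendsto tendsto_atBot x,
    monotone.ge_of_tendsto tendsto_atTop x⟩, odd, pos, tendsto_atTop, tendsto_atBot⟩

/-- The primitive of `h` vanishing at `0`, rescaled to have limit `1` at `∞`. This is how a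
normalizing function is obtained from an even density `h`. It is meaningful only when `h` has
nonzero integral over `(0, ∞)`; otherwise division by zero makes it `0`. -/
noncomputable def normalizedPrimitive (h : ℝ → ℝ) (x : ℝ) : ℝ :=
  (∫ s in (0 : ℝ)..x, h s) / ∫ s in Ioi 0, h s

theorem isNormalizing_normalizedPrimitive {h : ℝ → ℝ} (hsmooth : ContDiff ℝ ∞ h)
    (hint : Integrable h) (heven : h.Even) (hnonneg : 0 ≤ h) (hzero : 0 < h 0) :
    IsNormalizing (normalizedPrimitive h) := by
  have primitive_pos (x : ℝ) (hx : 0 < x) : 0 < ∫ s in (0 : ℝ)..x, h s :=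
    intervalIntegral.integral_pos hx hsmooth.continuous.continuousOn (fun y _ ↦ hnonneg y)
      ⟨0, left_mem_Icc.2 hx.le, hzero⟩
  have primitive_monotone := monotone_primitive hint hnonneg 0
  have primitive_tendsto :
      Tendsto (fun x ↦ ∫ s in (0 : ℝ)..x, h s) atTop (𝓝 (∫ s in Ioi 0, h s)) :=
    intervalIntegral_tendsto_integral_Ioi 0 hint.integrableOn tendsto_id
  have limit_pos : 0 < ∫ s in Ioi 0, h s :=
    (primitive_pos 1 one_pos).trans_le (primitive_monotone.ge_of_tendsto primitive_tendsto 1)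
  refine .of_monotone ((contDiff_infty_primitive hsmooth 0).div_const _)
    (primitive_monotone.div_const limit_pos.le) (fun x ↦ ?_)
    (fun x hx ↦ div_pos (primitive_pos x hx) limit_pos) ?_
  · exact (congrArg (· / _) (odd_primitive heven x)).trans (neg_div _ _)
  · exact div_self limit_pos.ne' ▸ primitive_tendsto.div_const (∫ s in Ioi 0, h s)

theorem integral_normalizedPrimitive_mul_fourier_eq_zero {h : ℝ → ℝ} (heven : h.Even)
    {G φ : 𝓢(ℝ, ℂ)} (hG : ∀ x, (h x : ℂ) = 𝓕⁻ G x) (hGφ : ∀ v, G v * φ v = 0) :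
    ∫ x, (normalizedPrimitive h x : ℂ) * 𝓕 φ x = 0 := by
  have fourierInv_even : (⇑(𝓕⁻ G : 𝓢(ℝ, ℂ))).Even := fun x ↦ by rw [← hG, ← hG, heven]
  have primitive_eq (x : ℝ) : ((∫ s in (0 : ℝ)..x, h s : ℝ) : ℂ) =
      2⁻¹ * (Real.sign ⋆[lsmul ℝ ℝ] ⇑(𝓕⁻ G : 𝓢(ℝ, ℂ))) x := by
    rw [sign_convolution_of_even (𝓕⁻ G).integrable fourierInv_even,
      ← intervalIntegral.integral_ofReal, funext hG]
    simp
  simp_rw [normalizedPrimitive, Complex.ofReal_div, primitive_eq, div_eq_inv_mul, mul_assoc,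
    integral_const_mul]
  rw [integral_convolution_fourierInv_mul_fourier_eq_zero measurable_real_sign.aestronglyMeasurable
    norm_real_sign_le_one hGφ, mul_zero, mul_zero]

theorem stmt10 (ε : ℝ) (hε : 0 < ε) :
    ∃ χ : ℝ → ℝ, ContDiff ℝ (⊤ : ℕ∞) χ ∧ (∀ x, χ x ∈ Set.Icc (-1 : ℝ) 1) ∧
      (∀ x, χ (-x) = - χ x) ∧ (∀ x > 0, 0 < χ x) ∧
      Filter.Tendsto χ Filter.atTop (nhds 1) ∧
      Filter.Tendsto χ Filter.atBot (nhds (-1)) ∧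
      (∀ φ : SchwartzMap ℝ ℂ, tsupport (fun x : ℝ => φ x) ∩ Set.Ioo (-ε) ε = ∅ →
        ∫ x : ℝ, (χ x : ℂ) * 𝓕 (fun y : ℝ => φ y) x = 0) := by
  obtain ⟨G, G_support, even, nonneg, pos⟩ :=
    exists_schwartzMap_support_subset_ball_fourierInv_nonneg (V := ℝ) hε
  let h : ℝ → ℝ := fun x ↦ (𝓕⁻ G x).re
  have h_even : h.Even := fun x ↦ congrArg Complex.re (even x)
  have ofReal_h (x : ℝ) : (h x : ℂ) = 𝓕⁻ G x := (Complex.eq_re_of_ofReal_le (nonneg x)).symm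
  have normalizing : IsNormalizing (normalizedPrimitive h) :=
    isNormalizing_normalizedPrimitive (Complex.reCLM.contDiff.comp ((𝓕⁻ G).smooth ⊤))
      (𝓕⁻ G).integrable.re h_even (fun x ↦ (Complex.nonneg_iff.1 (nonneg x)).1)
      (Complex.pos_iff.1 pos).1
  refine ⟨normalizedPrimitive h, normalizing.contDiff, normalizing.mem_Icc, normalizing.odd,
    normalizing.pos, normalizing.tendsto_atTop, normalizing.tendsto_atBot, fun φ hφ ↦ ?_⟩
  have G_mul_φ (v : ℝ) : G v * φ v = 0 := by
    by_contra hne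
    have hv : v ∈ Metric.ball 0 ε := G_support (left_ne_zero_of_mul hne)
    rw [Real.ball_eq_Ioo, zero_sub, zero_add] at hv
    exact eq_empty_iff_forall_notMem.1 hφ v
      ⟨subset_tsupport _ (right_ne_zero_of_mul hne), hv⟩
  exact integral_normalizedPrimitive_mul_fourier_eq_zero h_even ofReal_h G_mul_φ
end

section
/- Let φ ∈ C_c^∞(ℝⁿ) be nonnegative with ∫φ = 1, and for t > 0 set φ_t(x) = t^{−n}φ(x/t). Let f ∈ C^∞(ℝⁿ) have all first partial derivatives bounded (say |∂f/∂x_j| ≤ C for all j), and let supp(φ) ⊆ [−a,a]ⁿ. Then for each 1 ≤ k ≤ n, the commutator [f·∂/∂x_k, u ↦ φ_t∗u], acting on compactly supported smooth functions, extends to a bounded operator on L²(ℝⁿ) whose norm is bounded by C(na‖∂φ/∂x_k‖_{L¹} + ‖φ‖_{L¹}), independently of t. -/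
open MeasureTheory

/-!
Since `∂ᵥ (ψ ∗ u) = ψ ∗ ∂ᵥu`, the commutator of `f ∂ᵥ` with convolution by `ψ` sends `u` to
`∫ ψ (x - y) (f x - f y) ∂ᵥu(y) dy`. One integration by parts turns this into an integral operator
with kernel `∂ᵥψ (x - y) (f x - f y) + ψ (x - y) ∂ᵥf(y)`. If `ψ` is supported in the ball of radius
`r` around the origin, `f` is `L`-Lipschitz and `|∂ᵥf| ≤ C`, the kernel is dominated by
`L r |∂ᵥψ| + C |ψ|` evaluated at `x - y`, and Schur's test applies. For `ψ = φ_t` the radius is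
proportional to `t` whereas `‖∂ᵥφ_t‖₁ = t⁻¹ ‖∂ᵥφ‖₁`, so that `t` cancels.
-/

section SchurTest

open scoped ENNReal NNReal

variable {α β : Type*} [MeasurableSpace α] [MeasurableSpace β] {μ : Measure α} {ν : Measure β}

theorem rpow_lintegral_mul_le {w h : β → ℝ≥0∞} (hw : AEMeasurable w ν) (hh : AEMeasurable h ν)
    {p : ℝ} (hp : 1 ≤ p) :
    (∫⁻ y, w y * h y ∂ν) ^ p ≤ (∫⁻ y, w y ∂ν) ^ (p - 1) * ∫⁻ y, w y * h y ^ p ∂ν := by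
  have hp0 : 0 < p := by positivity
  have hinv : p⁻¹ ≤ 1 := inv_le_one_of_one_le₀ hp
  have split : ∀ y, w y * h y = w y ^ (1 - p⁻¹) * (w y * h y ^ p) ^ p⁻¹ := fun y => by
    rw [ENNReal.mul_rpow_of_nonneg _ _ (by positivity), ENNReal.rpow_rpow_inv hp0.ne', ← mul_assoc,
      ← ENNReal.rpow_add_of_nonneg _ _ (by linarith) (by positivity), sub_add_cancel,
      ENNReal.rpow_one]
  calc (∫⁻ y, w y * h y ∂ν) ^ p
      ≤ ((∫⁻ y, w y ∂ν) ^ (1 - p⁻¹) * (∫⁻ y, w y * h y ^ p ∂ν) ^ p⁻¹) ^ p := by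
        gcongr
        simp only [split]
        exact ENNReal.lintegral_mul_norm_pow_le hw (hw.mul (hh.pow_const p)) (by linarith)
          (by positivity) (sub_add_cancel _ _)
    _ = (∫⁻ y, w y ∂ν) ^ (p - 1) * ∫⁻ y, w y * h y ^ p ∂ν := by
        rw [ENNReal.mul_rpow_of_nonneg _ _ hp0.le, ENNReal.rpow_inv_rpow hp0.ne',
          ← ENNReal.rpow_mul, sub_mul, inv_mul_cancel₀ hp0.ne', one_mul]

theorem lintegral_rpow_lintegral_mul_le [SFinite μ] [SFinite ν] {K : α → β → ℝ≥0∞}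
    (hK : Measurable (Function.uncurry K)) {A B : ℝ≥0∞} (hA : ∀ x, ∫⁻ y, K x y ∂ν ≤ A)
    (hB : ∀ y, ∫⁻ x, K x y ∂μ ≤ B) {h : β → ℝ≥0∞} (hh : AEMeasurable h ν) {p : ℝ} (hp : 1 ≤ p) :
    ∫⁻ x, (∫⁻ y, K x y * h y ∂ν) ^ p ∂μ ≤ A ^ (p - 1) * B * ∫⁻ y, h y ^ p ∂ν := by
  have hKh : AEMeasurable (Function.uncurry fun x y => K x y * h y ^ p) (μ.prod ν) :=
    hK.aemeasurable.mul (hh.pow_const p).comp_snd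
  calc ∫⁻ x, (∫⁻ y, K x y * h y ∂ν) ^ p ∂μ
      ≤ ∫⁻ x, A ^ (p - 1) * ∫⁻ y, K x y * h y ^ p ∂ν ∂μ := by
        gcongr with x
        refine (rpow_lintegral_mul_le hK.of_uncurry_left.aemeasurable hh hp).trans ?_
        exact mul_le_mul_left (ENNReal.rpow_le_rpow (hA x) (sub_nonneg.2 hp)) _
    _ = A ^ (p - 1) * ∫⁻ y, (∫⁻ x, K x y ∂μ) * h y ^ p ∂ν := by
        rw [lintegral_const_mul'' _ (by exact hKh.lintegral_prod_right'),
          lintegral_lintegral_swap hKh]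
        simp_rw [lintegral_mul_const _ hK.of_uncurry_right]
    _ ≤ A ^ (p - 1) * ∫⁻ y, B * h y ^ p ∂ν := by
        gcongr with y
        exact hB y
    _ = A ^ (p - 1) * B * ∫⁻ y, h y ^ p ∂ν := by
        rw [lintegral_const_mul'' _ (hh.pow_const p), mul_assoc]

theorem eLpNorm_le_mul_eLpNorm_of_enorm_le_lintegral_mul [SFinite μ] [SFinite ν]
    {F G : Type*} [NormedAddCommGroup F] [NormedAddCommGroup G] {K : α → β → ℝ≥0∞}
    (hK : Measurable (Function.uncurry K)) {M : ℝ≥0∞} (hrow : ∀ x, ∫⁻ y, K x y ∂ν ≤ M)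
    (hcol : ∀ y, ∫⁻ x, K x y ∂μ ≤ M) {u : β → F} (hu : AEStronglyMeasurable u ν) {T : α → G}
    (hT : ∀ x, ‖T x‖ₑ ≤ ∫⁻ y, K x y * ‖u y‖ₑ ∂ν) {p : ℝ≥0∞} (hp : 1 ≤ p) :
    eLpNorm T p μ ≤ M * eLpNorm u p ν := by
  induction p with
  | top =>
    simp only [eLpNorm_exponent_top]
    refine eLpNormEssSup_le_of_ae_enorm_bound (.of_forall fun x => ?_)
    calc ‖T x‖ₑ ≤ ∫⁻ y, K x y * ‖u y‖ₑ ∂ν := hT x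
      _ ≤ ∫⁻ y, K x y * eLpNormEssSup u ν ∂ν := by
        refine lintegral_mono_ae ?_
        filter_upwards [enorm_ae_le_eLpNormEssSup u ν] with y hy
        gcongr
      _ = (∫⁻ y, K x y ∂ν) * eLpNormEssSup u ν := lintegral_mul_const _ hK.of_uncurry_left
      _ ≤ M * eLpNormEssSup u ν := by gcongr; exact hrow x
  | coe p =>
    have hp1 : (1 : ℝ) ≤ p := by exact_mod_cast hp
    have hp0 : (0 : ℝ) < p := by positivity
    have hp0' : p ≠ 0 := by exact_mod_cast hp0.ne'
    rw [← ENNReal.rpow_le_rpow_iff hp0, ENNReal.mul_rpow_of_nonneg _ _ hp0.le,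
      eLpNorm_nnreal_pow_eq_lintegral hp0', eLpNorm_nnreal_pow_eq_lintegral hp0']
    calc ∫⁻ x, ‖T x‖ₑ ^ (p : ℝ) ∂μ
        ≤ ∫⁻ x, (∫⁻ y, K x y * ‖u y‖ₑ ∂ν) ^ (p : ℝ) ∂μ := by gcongr with x; exact hT x
      _ ≤ M ^ ((p : ℝ) - 1) * M * ∫⁻ y, ‖u y‖ₑ ^ (p : ℝ) ∂ν :=
        lintegral_rpow_lintegral_mul_le hK hrow hcol hu.enorm hp1
      _ = M ^ (p : ℝ) * ∫⁻ y, ‖u y‖ₑ ^ (p : ℝ) ∂ν := by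
        nth_rw 2 [← ENNReal.rpow_one M]
        rw [← ENNReal.rpow_add_of_nonneg _ _ (by linarith) zero_le_one, sub_add_cancel]

theorem eLpNorm_integral_smul_le_of_abs_le_sub {E F : Type*} [AddCommGroup E] [MeasurableSpace E]
    [MeasurableAdd₂ E] [MeasurableNeg E] {μ : Measure E} [SFinite μ]
    [μ.IsAddLeftInvariant] [μ.IsNegInvariant] [NormedAddCommGroup F] [NormedSpace ℝ F]
    {k : E → E → ℝ} {g : E → ℝ} (hg : Integrable g μ) (hgm : Measurable g)
    (hkg : ∀ x y, |k x y| ≤ g (x - y)) {u : E → F} (hu : AEStronglyMeasurable u μ)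
    {p : ℝ≥0∞} (hp : 1 ≤ p) :
    eLpNorm (fun x => ∫ y, k x y • u y ∂μ) p μ
      ≤ ENNReal.ofReal (∫ z, g z ∂μ) * eLpNorm u p μ := by
  have hg0 : ∀ z, 0 ≤ g z := fun z => by simpa using (abs_nonneg _).trans (hkg z 0)
  have hint : ENNReal.ofReal (∫ z, g z ∂μ) = ∫⁻ z, ENNReal.ofReal (g z) ∂μ :=
    ofReal_integral_eq_lintegral_ofReal hg (.of_forall hg0)
  refine eLpNorm_le_mul_eLpNorm_of_enorm_le_lintegral_mul
    (K := fun x y => ENNReal.ofReal (g (x - y))) (by fun_prop) (fun x => ?_) (fun y => ?_) hu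
    (fun x => ?_) hp
  · rw [hint, lintegral_sub_left_eq_self fun z => ENNReal.ofReal (g z)]
  · rw [hint, lintegral_sub_right_eq_self fun z => ENNReal.ofReal (g z)]
  · refine (enorm_integral_le_lintegral_enorm _).trans (lintegral_mono fun y => ?_)
    rw [enorm_smul, Real.enorm_eq_ofReal_abs]
    gcongr
    exact hkg x y

end SchurTest

theorem lipschitzWith_card_mul_of_norm_fderiv_single_le {ι G : Type*} [Fintype ι] [DecidableEq ι]
    [NormedAddCommGroup G] [NormedSpace ℝ G] {f : (ι → ℝ) → G} (hf : Differentiable ℝ f)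
    {C : NNReal} (hC : ∀ i x, ‖fderiv ℝ f x (Pi.single i 1)‖ ≤ C) :
    LipschitzWith (Fintype.card ι * C) f := by
  refine lipschitzWith_of_nnnorm_fderiv_le (𝕜 := ℝ) hf fun x =>
    ContinuousLinearMap.opNorm_le_bound _ (NNReal.coe_nonneg _) fun v => ?_
  calc ‖fderiv ℝ f x v‖
      = ‖∑ i, v i • fderiv ℝ f x (Pi.single i 1)‖ := by
        conv_lhs => rw [pi_eq_sum_univ' v, map_sum]
        simp only [map_smul]
    _ ≤ ∑ i, ‖v i‖ * C := norm_sum_le_of_le _ fun i _ => by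
        rw [norm_smul]
        gcongr
        exact hC i x
    _ ≤ Fintype.card ι • ‖v‖ * C := by
        rw [← Finset.sum_mul]
        gcongr
        exact Pi.sum_norm_apply_le_norm v
    _ = (Fintype.card ι * C : NNReal) * ‖v‖ := by
        push_cast
        rw [nsmul_eq_mul]
        ring

section Commutator

open scoped Convolution NNReal ENNReal

variable {E F : Type*} [NormedAddCommGroup E] [NormedSpace ℝ E] [NormedAddCommGroup F]
  [NormedSpace ℝ F]

/-- The commutator `[f ∂ᵥ, u ↦ ψ ∗ u]` of the first-order operator `f ∂ᵥ` in the direction `v` with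
convolution by `ψ`, applied to a vector-valued function `u`. Derivatives are `fderiv`, hence zero
where they do not exist. -/
noncomputable def convCommutator [MeasurableSpace E] (μ : Measure E) (ψ f : E → ℝ) (v : E)
    (u : E → F) (x : E) : F :=
  f x • fderiv ℝ (ψ ⋆[.lsmul ℝ ℝ, μ] u) x v -
    (ψ ⋆[.lsmul ℝ ℝ, μ] fun y => f y • fderiv ℝ u y v) x

/-- The kernel of `convCommutator` as an integral operator acting on `u` itself, without
derivatives of `u`. -/
noncomputable def commutatorKernel (ψ f : E → ℝ) (v x y : E) : ℝ :=
  fderiv ℝ ψ (x - y) v * (f x - f y) + ψ (x - y) * fderiv ℝ f y v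

variable {ψ f : E → ℝ}

theorem fderiv_comp_sub_mul_sub_apply (hψ : Differentiable ℝ ψ) (hf : Differentiable ℝ f)
    (v x y : E) :
    fderiv ℝ (fun y => ψ (x - y) * (f x - f y)) y v = -commutatorKernel ψ f v x y := by
  have hψx : HasFDerivAt (fun y => ψ (x - y)) (-fderiv ℝ ψ (x - y)) y := by
    simpa [Function.comp_def] using (hψ (x - y)).hasFDerivAt.comp y ((hasFDerivAt_id y).const_sub x)
  have hfx : HasFDerivAt (fun y => f x - f y) (-fderiv ℝ f y) y := (hf y).hasFDerivAt.const_sub _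
  rw [(hψx.fun_mul hfx).fderiv]
  simp only [commutatorKernel, add_apply, smul_apply, neg_apply, smul_eq_mul]
  ring

theorem continuous_commutatorKernel (hψ : ContDiff ℝ 1 ψ) (hf : ContDiff ℝ 1 f) (v x : E) :
    Continuous (commutatorKernel ψ f v x) := by
  have := hψ.continuous_fderiv one_ne_zero
  have := hf.continuous_fderiv one_ne_zero
  have := hψ.continuous
  have := hf.continuous
  unfold commutatorKernel
  fun_prop

theorem abs_commutatorKernel_le {r C : ℝ} {L : ℝ≥0} {v : E}
    (hψ : tsupport ψ ⊆ Metric.closedBall 0 r) (hf : LipschitzWith L f)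
    (hC : ∀ y, |fderiv ℝ f y v| ≤ C) (x y : E) :
    |commutatorKernel ψ f v x y| ≤ L * r * |fderiv ℝ ψ (x - y) v| + C * |ψ (x - y)| := by
  have hdiff : |fderiv ℝ ψ (x - y) v * (f x - f y)| ≤ L * r * |fderiv ℝ ψ (x - y) v| := by
    by_cases hxy : x - y ∈ tsupport ψ
    · have hr : ‖x - y‖ ≤ r := mem_closedBall_zero_iff.1 (hψ hxy)
      have hfxy : |f x - f y| ≤ L * r := (hf.norm_sub_le x y).trans (by gcongr)
      rw [abs_mul, mul_comm]
      gcongr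
    · simp [fderiv_of_notMem_tsupport ℝ hxy]
  have hderiv : |ψ (x - y) * fderiv ℝ f y v| ≤ C * |ψ (x - y)| := by
    rw [abs_mul, mul_comm]
    gcongr
    exact hC y
  exact (abs_add_le _ _).trans (add_le_add hdiff hderiv)

theorem convCommutator_eq_sub_integral [MeasurableSpace E] [BorelSpace E] {μ : Measure E}
    [μ.IsAddLeftInvariant] [μ.IsNegInvariant] (ψ f : E → ℝ) (v : E) (u : E → F) :
    convCommutator μ ψ f v u = fun x =>
      f x • fderiv ℝ (fun z => ∫ y, ψ (z - y) • u y ∂μ) x v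
        - ∫ y, ψ (x - y) • f y • fderiv ℝ u y v ∂μ := by
  have hconv : ∀ w : E → F, ψ ⋆[.lsmul ℝ ℝ, μ] w = fun z => ∫ y, ψ (z - y) • w y ∂μ :=
    fun w => funext fun z => convolution_lsmul_swap
  ext x
  simp only [convCommutator, hconv]

variable [MeasurableSpace E] [BorelSpace E] [FiniteDimensional ℝ E] {μ : Measure E}
  [μ.IsAddHaarMeasure] {u : E → F}

theorem convCommutator_eq_integral_smul_fderiv (hψ : Continuous ψ) (hf : Continuous f)
    (hu : ContDiff ℝ 1 u) (huc : HasCompactSupport u) (v x : E) :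
    convCommutator μ ψ f v u x = ∫ y, (ψ (x - y) * (f x - f y)) • fderiv ℝ u y v ∂μ := by
  have hu' : Continuous (fderiv ℝ u) := hu.continuous_fderiv one_ne_zero
  have hderiv : fderiv ℝ (ψ ⋆[.lsmul ℝ ℝ, μ] u) x v
      = ∫ y, ψ (x - y) • fderiv ℝ u y v ∂μ := by
    rw [(huc.hasFDerivAt_convolution_right _ hψ.locallyIntegrable hu x).fderiv,
      convolution_precompR_apply _ hψ.locallyIntegrable (huc.fderiv ℝ) hu', convolution_lsmul_swap]
  have hint : ∀ w : E → ℝ, Continuous w → Integrable (fun y => w y • fderiv ℝ u y v) μ :=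
    fun w hw => (by fun_prop : Continuous fun y => w y • fderiv ℝ u y v)
      |>.integrable_of_hasCompactSupport (huc.fderiv_apply ℝ v).smul_left
  simp only [convCommutator, hderiv, convolution_lsmul_swap, smul_smul]
  rw [← integral_smul, ← integral_sub]
  · simp only [smul_smul, ← sub_smul, mul_sub, mul_comm (f x)]
  · exact (hint _ (by fun_prop)).smul _
  · exact hint _ (by fun_prop)

theorem convCommutator_eq_integral_commutatorKernel_smul (hψ : ContDiff ℝ 1 ψ) (hf : ContDiff ℝ 1 f)
    (hu : ContDiff ℝ 1 u) (huc : HasCompactSupport u) (v x : E) :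
    convCommutator μ ψ f v u x = ∫ y, commutatorKernel ψ f v x y • u y ∂μ := by
  have hψd : Differentiable ℝ ψ := hψ.differentiable one_ne_zero
  have hfd : Differentiable ℝ f := hf.differentiable one_ne_zero
  have hud : Differentiable ℝ u := hu.differentiable one_ne_zero
  have : Continuous (fderiv ℝ u) := hu.continuous_fderiv one_ne_zero
  have hk : Continuous (commutatorKernel ψ f v x) := continuous_commutatorKernel hψ hf v x
  have := hψ.continuous
  have := hf.continuous
  have := hu.continuous
  rw [convCommutator_eq_integral_smul_fderiv hψ.continuous hf.continuous hu huc,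
    integral_smul_fderiv_eq_neg_fderiv_smul_of_integrable]
  · simp only [fderiv_comp_sub_mul_sub_apply hψd hfd, neg_smul, integral_neg, neg_neg]
  · simp only [fderiv_comp_sub_mul_sub_apply hψd hfd]
    exact Continuous.integrable_of_hasCompactSupport (by fun_prop) huc.smul_left
  · exact Continuous.integrable_of_hasCompactSupport (by fun_prop)
      (huc.fderiv_apply ℝ v).smul_left
  · exact Continuous.integrable_of_hasCompactSupport (by fun_prop) huc.smul_left
  · exact fun y _ => by fun_prop
  · exact fun y _ => hud y

theorem eLpNorm_convCommutator_le (hψ : ContDiff ℝ 1 ψ) {r : ℝ}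
    (hψr : tsupport ψ ⊆ Metric.closedBall 0 r) (hf : ContDiff ℝ 1 f) {L : ℝ≥0}
    (hL : LipschitzWith L f) {v : E} {C : ℝ} (hC : ∀ y, |fderiv ℝ f y v| ≤ C)
    (hu : ContDiff ℝ 1 u) (huc : HasCompactSupport u) {p : ℝ≥0∞} (hp : 1 ≤ p) :
    eLpNorm (convCommutator μ ψ f v u) p μ
      ≤ ENNReal.ofReal (L * r * ∫ y, |fderiv ℝ ψ y v| ∂μ + C * ∫ y, |ψ y| ∂μ)
        * eLpNorm u p μ := by
  have hψc : HasCompactSupport ψ :=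
    (isCompact_closedBall 0 r).of_isClosed_subset (isClosed_tsupport ψ) hψr
  have hψ' : Continuous fun y => fderiv ℝ ψ y v :=
    (hψ.continuous_fderiv one_ne_zero).clm_apply continuous_const
  have hi : Integrable (fun y => L * r * |fderiv ℝ ψ y v|) μ :=
    (hψ'.integrable_of_hasCompactSupport (hψc.fderiv_apply ℝ v)).abs.const_mul _
  have hi' : Integrable (fun y => C * |ψ y|) μ :=
    (hψ.continuous.integrable_of_hasCompactSupport hψc).abs.const_mul _
  rw [← integral_const_mul, ← integral_const_mul, ← integral_add hi hi',
    funext (convCommutator_eq_integral_commutatorKernel_smul hψ hf hu huc v)]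
  have := hψ.continuous.measurable
  have := hψ'.measurable
  exact eLpNorm_integral_smul_le_of_abs_le_sub (hi.add hi') (by fun_prop)
    (abs_commutatorKernel_le hψr hL hC) hu.continuous.aestronglyMeasurable hp

end Commutator

section Dilation

open scoped NNReal ENNReal

variable {E : Type*} [NormedAddCommGroup E] [NormedSpace ℝ E]

/-- The `L¹`-normalised dilation `φ_t (x) = t⁻ⁿ φ (x / t)` of a function on an `n`-dimensional
space. -/
noncomputable def dilate (t : ℝ) (φ : E → ℝ) (x : E) : ℝ :=
  t ^ (-(Module.finrank ℝ E : ℤ)) * φ (t⁻¹ • x)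

theorem contDiff_dilate {m : WithTop ℕ∞} {φ : E → ℝ} (hφ : ContDiff ℝ m φ) (t : ℝ) :
    ContDiff ℝ m (dilate t φ) :=
  contDiff_const.mul (hφ.comp (contDiff_const_smul _))

theorem fderiv_dilate_apply (t : ℝ) (φ : E → ℝ) (x v : E) :
    fderiv ℝ (dilate t φ) x v = t⁻¹ * dilate t (fun y => fderiv ℝ φ y v) x := by
  change fderiv ℝ (t ^ (-(Module.finrank ℝ E : ℤ)) • fun y => φ (t⁻¹ • y)) x v = _
  rw [fderiv_const_smul_field, Pi.smul_apply, fderiv_comp_smul]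
  simp only [dilate, smul_apply, smul_eq_mul]
  ring

theorem abs_dilate {t : ℝ} (ht : 0 ≤ t) (φ : E → ℝ) (x : E) :
    |dilate t φ x| = dilate t (fun y => |φ y|) x := by
  rw [dilate, dilate, abs_mul, abs_of_nonneg (zpow_nonneg ht _)]

theorem tsupport_dilate_subset_closedBall {t a : ℝ} (ht : 0 < t) {φ : E → ℝ}
    (hφ : tsupport φ ⊆ Metric.closedBall 0 a) :
    tsupport (dilate t φ) ⊆ Metric.closedBall 0 (t * a) := by
  refine closure_minimal (fun x hx => ?_) Metric.isClosed_closedBall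
  have hxa : ‖t⁻¹ • x‖ ≤ a :=
    mem_closedBall_zero_iff.1 (hφ (subset_tsupport φ (right_ne_zero_of_mul hx)))
  rwa [norm_smul, norm_inv, Real.norm_of_nonneg ht.le, inv_mul_le_iff₀ ht,
    ← mem_closedBall_zero_iff] at hxa

variable [MeasurableSpace E] [BorelSpace E] [FiniteDimensional ℝ E] {μ : Measure E}
  [μ.IsAddHaarMeasure]

theorem integral_dilate {t : ℝ} (ht : 0 < t) (φ : E → ℝ) :
    ∫ x, dilate t φ x ∂μ = ∫ x, φ x ∂μ := by
  simp only [dilate]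
  rw [integral_const_mul, Measure.integral_comp_inv_smul_of_nonneg _ _ ht.le, smul_eq_mul,
    zpow_neg, zpow_natCast, inv_mul_cancel_left₀ (pow_pos ht _).ne']

theorem eLpNorm_convCommutator_dilate_le {F : Type*} [NormedAddCommGroup F] [NormedSpace ℝ F]
    {φ f : E → ℝ} (hφ : ContDiff ℝ 1 φ) {a : ℝ} (hφa : tsupport φ ⊆ Metric.closedBall 0 a)
    (hf : ContDiff ℝ 1 f) {L : ℝ≥0} (hL : LipschitzWith L f) {v : E} {C : ℝ}
    (hC : ∀ y, |fderiv ℝ f y v| ≤ C) {u : E → F} (hu : ContDiff ℝ 1 u)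
    (huc : HasCompactSupport u) {p : ℝ≥0∞} (hp : 1 ≤ p) {t : ℝ} (ht : 0 < t) :
    eLpNorm (convCommutator μ (dilate t φ) f v u) p μ
      ≤ ENNReal.ofReal (L * a * ∫ y, |fderiv ℝ φ y v| ∂μ + C * ∫ y, |φ y| ∂μ)
        * eLpNorm u p μ := by
  have hnorm : ∫ y, |dilate t φ y| ∂μ = ∫ y, |φ y| ∂μ := by
    simp only [abs_dilate ht.le, integral_dilate ht]
  have hnorm' : ∫ y, |fderiv ℝ (dilate t φ) y v| ∂μ = t⁻¹ * ∫ y, |fderiv ℝ φ y v| ∂μ := by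
    simp only [fderiv_dilate_apply, abs_mul, abs_dilate ht.le, abs_of_pos (inv_pos.2 ht),
      integral_const_mul, integral_dilate ht]
  have hcancel : L * (t * a) * (t⁻¹ * ∫ y, |fderiv ℝ φ y v| ∂μ)
      = L * a * ∫ y, |fderiv ℝ φ y v| ∂μ := by
    field_simp
  have := eLpNorm_convCommutator_le (μ := μ) (contDiff_dilate hφ t)
    (tsupport_dilate_subset_closedBall ht hφa) hf hL hC hu huc hp
  rwa [hnorm, hnorm', hcancel] at this

end Dilation

open scoped NNReal ENNReal in
theorem stmt17_general {n : ℕ} {F : Type*} [NormedAddCommGroup F] [NormedSpace ℝ F]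
    {φ f : (Fin n → ℝ) → ℝ} (hφ : ContDiff ℝ 1 φ) {a : ℝ}
    (hφa : tsupport φ ⊆ Metric.closedBall 0 a) (hf : ContDiff ℝ 1 f) {C : ℝ≥0}
    (hC : ∀ j x, |fderiv ℝ f x (Pi.single j 1)| ≤ C) (k : Fin n) {t : ℝ} (ht : 0 < t)
    {u : (Fin n → ℝ) → F} (hu : ContDiff ℝ 1 u) (huc : HasCompactSupport u)
    {p : ℝ≥0∞} (hp : 1 ≤ p) :
    eLpNorm (convCommutator volume (dilate t φ) f (Pi.single k 1) u) p
      ≤ ENNReal.ofReal (C * (n * a * (∫ y, |fderiv ℝ φ y (Pi.single k 1)|) + ∫ y, |φ y|))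
        * eLpNorm u p := by
  have hL : LipschitzWith (n * C) f := by
    simpa using lipschitzWith_card_mul_of_norm_fderiv_single_le (hf.differentiable one_ne_zero) hC
  refine (eLpNorm_convCommutator_dilate_le hφ hφa hf hL (hC k) hu huc hp ht).trans_eq ?_
  push_cast
  ring_nf

theorem stmt17 (n : ℕ) (φ : (Fin n → ℝ) → ℝ) (hφ : ContDiff ℝ (⊤ : ℕ∞) φ)
    (hφc : HasCompactSupport φ) (hφ0 : ∀ x, 0 ≤ φ x) (hφ1 : ∫ x, φ x = 1)
    (a : ℝ) (ha : 0 < a) (hsupp : tsupport φ ⊆ {x : Fin n → ℝ | ∀ i, |x i| ≤ a})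
    (f : (Fin n → ℝ) → ℝ) (hf : ContDiff ℝ (⊤ : ℕ∞) f) (C : ℝ) (hC0 : 0 ≤ C)
    (hC : ∀ (j : Fin n) (x : Fin n → ℝ), |fderiv ℝ f x (Pi.single j 1)| ≤ C)
    (k : Fin n) (t : ℝ) (ht : 0 < t) :
    ∀ u : (Fin n → ℝ) → ℂ, ContDiff ℝ (⊤ : ℕ∞) u → HasCompactSupport u →
      eLpNorm (fun x : Fin n → ℝ =>
          (f x : ℂ) *
            fderiv ℝ (fun z : Fin n → ℝ =>
              ∫ y, ((t ^ (-(n : ℤ)) * φ (t⁻¹ • (z - y)) : ℝ) : ℂ) * u y) x (Pi.single k 1)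
          - ∫ y, ((t ^ (-(n : ℤ)) * φ (t⁻¹ • (x - y)) : ℝ) : ℂ) *
              ((f y : ℂ) * fderiv ℝ u y (Pi.single k 1))) 2 volume
        ≤ ENNReal.ofReal
            (C * (n * a * (∫ y, |fderiv ℝ φ y (Pi.single k 1)|) + ∫ y, φ y)) *
          eLpNorm u 2 volume := by
  intro u hu huc
  lift C to NNReal using hC0
  have hball : tsupport φ ⊆ Metric.closedBall 0 a := fun x hx =>
    mem_closedBall_zero_iff.2 ((pi_norm_le_iff_of_nonneg ha.le).2 (hsupp hx))
  have hle : (1 : WithTop ℕ∞) ≤ (⊤ : ℕ∞) := by simp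
  simpa [convCommutator_eq_sub_integral, dilate, abs_of_nonneg (hφ0 _)] using
    stmt17_general (hφ.of_le hle) hball (hf.of_le hle) hC k ht (hu.of_le hle) huc one_le_two
end
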